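/- Let Q be a finite quasigroup with tracks φ_i and spins φ_{ij} = φ_i ∘ φ_j⁻¹. If (α, β, γ) is an autotopism of Q, i.e. γ(x · y) = α(x) · β(y) for all x, y, then φ_{γ(i)γ(j)} = β ∘ φ_{ij} ∘ β⁻¹ for all i, j ∈ Q. -/

import Mathlib

/-!
Applying `γ` to `x * φ i x = i` gives `α x * β (φ i x) = γ i`, so `φ (γ i) ∘ α = β ∘ φ i`. In a spin
`φ i ∘ (φ j)⁻¹` the two occurrences of `α` cancel, leaving `β` alone.
-/

section Homotopism

variable {Q R : Type*} [Mul Q] [Mul R]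

/-- `f` is a track (right middle translation) of the element `i`: it sends each `x` to a right
factor completing `x` to the product `i`. Permutations enter through their coercions to
functions. -/
def IsTrack (i : Q) (f : Q → Q) : Prop :=
  ∀ x, x * f x = i

/-- The triple of maps `(α, β, γ)` is a homotopism from `Q` to `R`; an autotopism is a homotopism
from `Q` to itself whose components are permutations. -/
def IsHomotopism (α β γ : Q → R) : Prop :=
  ∀ x y, γ (x * y) = α x * β y

theorem IsTrack.apply_eq_of_mul_eq [IsLeftCancelMul Q] {i x y : Q} {f : Q → Q} (hf : IsTrack i f)
    (hxy : x * y = i) : f x = y :=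
  mul_left_cancel ((hf x).trans hxy.symm)

theorem IsHomotopism.track_comp [IsLeftCancelMul R] {α β γ : Q → R} (h : IsHomotopism α β γ)
    {i : Q} {f : Q → Q} {g : R → R} (hf : IsTrack i f) (hg : IsTrack (γ i) g) :
    g ∘ α = β ∘ f := by
  funext x
  have image_factors : α x * β (f x) = γ i := by rw [← h, hf]
  exact hg.apply_eq_of_mul_eq image_factors

theorem spin_autotopism_conj_general [IsLeftCancelMul R]
    {φ : Q → Equiv.Perm Q} (hφ : ∀ i, IsTrack i (φ i))
    {ψ : R → Equiv.Perm R} (hψ : ∀ i, IsTrack i (ψ i))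
    {α β γ : Q → R} (h : IsHomotopism α β γ) (i j : Q) :
    Function.Semiconj β ⇑(φ i * (φ j)⁻¹) ⇑(ψ (γ i) * (ψ (γ j))⁻¹) := by
  have track_apply (k x : Q) : ψ (γ k) (α x) = β (φ k x) :=
    congrFun (h.track_comp (hφ k) (hψ (γ k))) x
  intro y
  obtain ⟨x, rfl⟩ := (φ j).surjective y
  calc
    β ((φ i * (φ j)⁻¹) (φ j x)) = β (φ i x) := by simp
    _ = ψ (γ i) (α x) := (track_apply i x).symm
    _ = (ψ (γ i) * (ψ (γ j))⁻¹) (ψ (γ j) (α x)) := by simp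
    _ = (ψ (γ i) * (ψ (γ j))⁻¹) (β (φ j x)) := by rw [track_apply j x]

end Homotopism

/-- If `(α, β, γ)` is an autotopism of a finite quasigroup `Q`,
then the spins `φ i ∘ (φ j)⁻¹` satisfy
`φ (γ i) ∘ (φ (γ j))⁻¹ = β ∘ (φ i ∘ (φ j)⁻¹) ∘ β⁻¹` for all `i, j`. -/
theorem spin_autotopism_conj {Q : Type*} [Fintype Q] [Mul Q]
    (hL : ∀ a : Q, Function.Bijective (fun x : Q => a * x))
    (hR : ∀ a : Q, Function.Bijective (fun x : Q => x * a))
    (φ : Q → Equiv.Perm Q)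
    (hφ : ∀ i x : Q, x * φ i x = i)
    (α β γ : Equiv.Perm Q)
    (hat : ∀ x y : Q, γ (x * y) = α x * β y) :
    ∀ i j : Q, φ (γ i) * (φ (γ j))⁻¹ = β * (φ i * (φ j)⁻¹) * β⁻¹ := by
  have : IsLeftCancelMul Q := ⟨fun a => (hL a).injective⟩
  exact fun i j => eq_mul_inv_of_mul_eq <| Equiv.ext fun x =>
    (spin_autotopism_conj_general hφ hφ hat i j x).symm
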